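/- arXiv:1705.08977 — 2 statements merged into one kernel-verified Lean document; each statement's English description precedes it below -/
import Mathlib

section
/- Let a : ℕ → ℝ have finite range and let v : ℕ → V be any sequence with values in a set V. For each k ≥ 1 let M_k = max{a(ℓ) : 1 ≤ ℓ ≤ k}, let I_k = {ℓ ≤ k : a(ℓ) = M_k}, and for j = 1,…,|I_k| let ι_k(j) denote the j-th smallest element of I_k. Let S : ℕ → Set(ℕ) satisfy S(m) ⊆ {1,…,m} and S(m) ⊆ S(m+1) for every m ≥ 1 (Assumption (H3) on the selectors). Let k₁ be such that M_k = M_{k₁} for all k ≥ k₁. Then for every k ≥ k₁ the selected value set T_k = {v(ι_k(j)) : j ∈ S(|I_k|)} satisfies T_k ⊆ T_{k+1}. -/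
/-!
Once the running maximum no longer changes, passing from `k` to `k + 1` can only append the index
`k + 1` to the set `I_k` of maximizing indices. As `k + 1` exceeds every element of `I_k`, the
sorted list of `I_k` is a prefix of that of `I_{k+1}` (`sort_insert_of_forall_lt`), so the elements
at positions `1, …, |I_k|` are unchanged. The selectors only use these positions at step `k`, and by
their monotonicity every position selected at step `k` is selected again at step `k + 1`.
-/

/-- The running maximum `M_k = max {a ℓ : 1 ≤ ℓ ≤ k}` of the first `k`
terms of the sequence `a` (for `k ≥ 1` the set is finite and nonempty,
so it coincides with `sSup`). -/
noncomputable def runningMax (a : ℕ → ℝ) (k : ℕ) : ℝ :=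
  sSup (a '' Set.Icc 1 k)

open Classical in
/-- The set `I_k` of maximizing indices among the first `k` terms, as a
finset. -/
noncomputable def argmaxFinset (a : ℕ → ℝ) (k : ℕ) : Finset ℕ :=
  (Finset.Icc 1 k).filter (fun ℓ => a ℓ = runningMax a k)

/-- `ι_k(j)`: the `j`-th smallest element of `I_k` (with `j` 1-indexed,
junk value `0` if `j` is out of range). -/
noncomputable def nthArgmax (a : ℕ → ℝ) (k j : ℕ) : ℕ :=
  ((argmaxFinset a k).sort (· ≤ ·)).getD (j - 1) 0

/-- The set `T_k = {v(ι_k(j)) : j ∈ S(|I_k|)}` of values selected by the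
selectors `S` from the maximizing indices at iteration `k`. -/
def selectedValues {V : Type*} (a : ℕ → ℝ) (v : ℕ → V) (S : ℕ → Set ℕ)
    (k : ℕ) : Set V :=
  (fun j => v (nthArgmax a k j)) '' S (argmaxFinset a k).card

theorem sort_insert_of_forall_lt (s : Finset ℕ) (b : ℕ) (hb : ∀ x ∈ s, x < b) :
    (insert b s).sort (· ≤ ·) = s.sort (· ≤ ·) ++ [b] := by
  have hbs : b ∉ s := fun h => (hb b h).false
  refine List.Perm.eq_of_pairwise' (r := (· ≤ ·)) (Finset.pairwise_sort _ _) ?_ ?_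
  · rw [List.pairwise_append]
    refine ⟨Finset.pairwise_sort _ _, List.pairwise_singleton _ _, ?_⟩
    intro x hx y hy
    rw [List.mem_singleton] at hy
    rw [Finset.mem_sort] at hx
    exact hy ▸ (hb x hx).le
  · rw [← Multiset.coe_eq_coe, Finset.sort_eq, Finset.insert_val_of_notMem hbs,
      ← Multiset.coe_add, Finset.sort_eq, Multiset.coe_singleton, add_comm,
      Multiset.singleton_add]

/-- The maximum of finitely many (at least one) terms is attained, so `I_k` is nonempty. -/
theorem one_le_card_argmaxFinset (a : ℕ → ℝ) {k : ℕ} (hk : 1 ≤ k) :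
    1 ≤ (argmaxFinset a k).card := by
  have hne : (a '' Set.Icc 1 k).Nonempty := (Set.nonempty_Icc.2 hk).image a
  obtain ⟨l, hl, hal⟩ := hne.csSup_mem ((Set.finite_Icc 1 k).image a)
  rw [Nat.one_le_iff_ne_zero, Finset.card_ne_zero]
  exact ⟨l, Finset.mem_filter.2 ⟨Finset.mem_Icc.2 hl, hal⟩⟩

theorem argmaxFinset_succ (a : ℕ → ℝ) {k : ℕ} (h : runningMax a (k + 1) = runningMax a k) :
    argmaxFinset a (k + 1) = argmaxFinset a k ∨
      argmaxFinset a (k + 1) = insert (k + 1) (argmaxFinset a k) := by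
  have hI : Finset.Icc 1 (k + 1) = insert (k + 1) (Finset.Icc 1 k) := by
    ext x
    simp only [Finset.mem_Icc, Finset.mem_insert]
    omega
  unfold argmaxFinset
  rw [h, hI, Finset.filter_insert]
  split_ifs
  · exact Or.inr rfl
  · exact Or.inl rfl

/-- Once the running maximum has stabilized, under Assumption (H3) on the
selectors (`S m ⊆ {1,…,m}` and `S m ⊆ S (m+1)`), the sets of selected
values are nondecreasing. -/
theorem selectedValues_monotone {V : Type*}
    (a : ℕ → ℝ) (hfin : (Set.range a).Finite) (v : ℕ → V)
    (S : ℕ → Set ℕ)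
    (hS1 : ∀ m : ℕ, 1 ≤ m → S m ⊆ Set.Icc 1 m)
    (hS2 : ∀ m : ℕ, 1 ≤ m → S m ⊆ S (m + 1))
    (k₁ : ℕ) (hk₁ : 1 ≤ k₁)
    (hstab : ∀ k : ℕ, k₁ ≤ k → runningMax a k = runningMax a k₁) :
    ∀ k : ℕ, k₁ ≤ k →
      selectedValues a v S k ⊆ selectedValues a v S (k + 1) := by
  intro k hk
  have hk1 : 1 ≤ k := hk₁.trans hk
  have hM : runningMax a (k + 1) = runningMax a k :=
    (hstab (k + 1) (by omega)).trans (hstab k hk).symm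
  have hcard := one_le_card_argmaxFinset a hk1
  rcases argmaxFinset_succ a hM with heq | heq
  · simp only [selectedValues, nthArgmax, heq, subset_refl]
  · have hlt : ∀ x ∈ argmaxFinset a k, x < k + 1 := fun x hx =>
      Nat.lt_succ_of_le (Finset.mem_Icc.1 (Finset.mem_filter.1 hx).1).2
    have hc : (argmaxFinset a (k + 1)).card = (argmaxFinset a k).card + 1 := by
      rw [heq, Finset.card_insert_of_notMem fun h => (hlt _ h).false]
    rintro _ ⟨j, hj, rfl⟩
    have hjc := hS1 _ hcard hj
    refine ⟨j, hc ▸ hS2 _ hcard hj, ?_⟩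
    -- Since `1 ≤ j ≤ |I_k|`, the lookup never reaches the appended index.
    have hjl : j - 1 < ((argmaxFinset a k).sort (· ≤ ·)).length := by
      rw [Finset.length_sort]
      have := hjc.1
      have := hjc.2
      omega
    simp only [nthArgmax, heq, sort_insert_of_forall_lt _ _ hlt]
    rw [List.getD_append _ _ _ _ hjl]
end

section
/- Let a : ℕ → ℝ have finite range and let v : ℕ → V have finite range. For each k ≥ 1 let M_k = max{a(ℓ) : 1 ≤ ℓ ≤ k}, let I_k = {ℓ ≤ k : a(ℓ) = M_k}, and for j = 1,…,|I_k| let ι_k(j) denote the j-th smallest element of I_k. Let S : ℕ → Set(ℕ) satisfy S(m) ⊆ {1,…,m} and S(m) ⊆ S(m+1) for every m ≥ 1. Then the selected value sets T_k = {v(ι_k(j)) : j ∈ S(|I_k|)} are eventually constant: there exists k₀ such that T_k = T_{k₀} for every k ≥ k₀. -/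
theorem runningMax_eq_of_le {a : ℕ → ℝ} {k₁ k : ℕ} (h1 : 1 ≤ k₁)
    (hmax : ∀ ℓ, 1 ≤ ℓ → a ℓ ≤ a k₁) (hk : k₁ ≤ k) : runningMax a k = a k₁ := by
  have : IsGreatest (a '' Set.Icc 1 k) (a k₁) := by
    refine ⟨⟨k₁, ⟨h1, hk⟩, rfl⟩, ?_⟩
    rintro _ ⟨ℓ, hℓ, rfl⟩
    exact hmax ℓ hℓ.1
  exact this.csSup_eq

open Classical in
/-- The increasing enumeration of `I_k` as a filtered interval list; in this form the enumerations
for different `k` with the same running maximum are visibly prefixes of one another. -/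
theorem sort_argmaxFinset (a : ℕ → ℝ) (k : ℕ) :
    (argmaxFinset a k).sort (· ≤ ·) =
      (List.range' 1 k).filter (fun ℓ => decide (a ℓ = runningMax a k)) := by
  have hset : argmaxFinset a k =
      ((List.range' 1 k).filter (fun ℓ => decide (a ℓ = runningMax a k))).toFinset := by
    ext ℓ
    simp only [argmaxFinset, Finset.mem_filter, Finset.mem_Icc, List.mem_toFinset,
      List.mem_filter, List.mem_range'_1, decide_eq_true_eq]
    exact and_congr_left fun _ => by omega
  have hlt := (List.pairwise_lt_range' (s := 1) (n := k)).filter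
    (fun ℓ => decide (a ℓ = runningMax a k))
  rw [hset]
  exact (List.toFinset_sort _ (hlt.imp fun h => h.ne)).2 (hlt.imp fun h => h.le)

/-- While the running maximum is unchanged, `I_k` keeps its first positions, so every value selected
at step `k` is still selected at step `k + 1`. Nonemptiness of `I_k` gives `|I_k| ≥ 1`, where the
selector hypotheses apply. -/
theorem selectedValues_subset_succ {V : Type*} {a : ℕ → ℝ} (v : ℕ → V) {S : ℕ → Set ℕ}
    (hS1 : ∀ m : ℕ, 1 ≤ m → S m ⊆ Set.Icc 1 m)
    (hS2 : ∀ m : ℕ, 1 ≤ m → S m ⊆ S (m + 1)) {k : ℕ}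
    (hne : (argmaxFinset a k).Nonempty) (hM : runningMax a (k + 1) = runningMax a k) :
    selectedValues a v S k ⊆ selectedValues a v S (k + 1) := by
  classical
  have hcard : 1 ≤ (argmaxFinset a k).card := hne.card_pos
  obtain ⟨t, ht, htl⟩ : ∃ t, (argmaxFinset a (k + 1)).sort (· ≤ ·) =
      (argmaxFinset a k).sort (· ≤ ·) ++ t ∧ t.length ≤ 1 := by
    refine ⟨[1 + k].filter (fun ℓ => decide (a ℓ = runningMax a k)), ?_,
      List.length_filter_le _ _⟩
    rw [sort_argmaxFinset, sort_argmaxFinset, hM, List.range'_1_concat, List.filter_append]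
  have hlen : (argmaxFinset a (k + 1)).card = (argmaxFinset a k).card + t.length := by
    simpa using congrArg List.length ht
  rintro _ ⟨j, hj, rfl⟩
  refine ⟨j, ?_, ?_⟩
  · rw [hlen]
    rcases Nat.le_one_iff_eq_zero_or_eq_one.1 htl with h | h <;> rw [h]
    · exact hj
    · exact hS2 _ hcard hj
  · have hj' := hS1 _ hcard hj
    have hlt : j - 1 < ((argmaxFinset a k).sort (· ≤ ·)).length := by
      rw [Finset.length_sort]
      have := hj'.1
      have := hj'.2
      omega
    simp only [nthArgmax]
    rw [ht, List.getD_append _ _ _ _ hlt]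

/-- If the cut values `a` and the cut coefficients `v` take only finitely
many distinct values, then under Assumption (H3) on the selectors
(`S m ⊆ {1,…,m}` and `S m ⊆ S (m+1)`), the sets of selected values
`T_k` are eventually constant. -/
theorem selectedValues_eventually_constant {V : Type*}
    (a : ℕ → ℝ) (hafin : (Set.range a).Finite)
    (v : ℕ → V) (hvfin : (Set.range v).Finite)
    (S : ℕ → Set ℕ)
    (hS1 : ∀ m : ℕ, 1 ≤ m → S m ⊆ Set.Icc 1 m)
    (hS2 : ∀ m : ℕ, 1 ≤ m → S m ⊆ S (m + 1)) :
    ∃ k₀ : ℕ, ∀ k : ℕ, k₀ ≤ k →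
      selectedValues a v S k = selectedValues a v S k₀ := by
  obtain ⟨_, ⟨k₁, h1, rfl⟩, hub⟩ : ∃ M, IsGreatest (a '' Set.Ici 1) M :=
    ⟨_, Set.Nonempty.csSup_mem ⟨a 1, 1, Set.mem_Ici.2 le_rfl, rfl⟩ (hafin.subset (Set.image_subset_range _ _)),
      fun _ hx => le_csSup (hafin.subset (Set.image_subset_range _ _)).bddAbove hx⟩
  have hmax : ∀ ℓ, 1 ≤ ℓ → a ℓ ≤ a k₁ := fun ℓ hℓ => hub ⟨ℓ, hℓ, rfl⟩
  have hM : ∀ k, k₁ ≤ k → runningMax a k = a k₁ := fun k hk => runningMax_eq_of_le h1 hmax hk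
  have hmono : Monotone fun n => selectedValues a v S (k₁ + n) := by
    refine monotone_nat_of_le_succ fun n => selectedValues_subset_succ v hS1 hS2 ⟨k₁, ?_⟩ ?_
    · simp only [argmaxFinset, Finset.mem_filter, Finset.mem_Icc]
      exact ⟨⟨h1, by omega⟩, (hM _ (by omega)).symm⟩
    · rw [hM _ (by omega), hM _ (by omega)]
  have hfin : (Set.range fun n => selectedValues a v S (k₁ + n)).Finite := by
    refine hvfin.finite_subsets.subset ?_
    rintro _ ⟨n, rfl⟩ _ ⟨j, -, rfl⟩
    exact ⟨_, rfl⟩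
  obtain ⟨_, ⟨n, rfl⟩, hn⟩ := hfin.exists_maximal (Set.range_nonempty _)
  refine ⟨k₁ + n, fun k hk => ?_⟩
  obtain ⟨m, rfl⟩ := Nat.exists_eq_add_of_le hk
  have hle := hmono (Nat.le_add_right n m)
  rw [add_assoc]
  exact (hn ⟨n + m, rfl⟩ hle).antisymm hle
end
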